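/- arXiv:1705.02127 — 4 statements merged into one kernel-verified Lean document; each statement's English description precedes it below -/
import Mathlib

section
/- Let l_1,…,l_n and r_1,…,r_n be d-dimensional bit vectors and let ℓ ≥ 1, p ∈ {0,1}, q ≥ 0 be integers, and let G = G_{L,R,ℓ,p,q}. Then dist_G(u_1^L, u_1^R) ≥ 4ℓ − 2p + q. -/
namespace GraphOV

/-- Two bit vectors (functions into `Fin 2`) are orthogonal if in every coordinate
at least one of them is `0`. -/
def Orth {d : ℕ} (a b : Fin d → Fin 2) : Prop := ∀ k, a k = 0 ∨ b k = 0

/-- A system of internally disjoint paths joining exterior vertices from `E`: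
for each path name `i : ι` we record its two endpoints and its length. -/
structure PathSys (E : Type) (ι : Type) where
  src : ι → E
  dst : ι → E
  len : ι → ℕ

namespace PathSys

variable {E ι : Type}

/-- Endpoints of zero-length paths get identified. -/
def idRel (S : PathSys E ι) (a b : E) : Prop :=
  ∃ i, S.len i = 0 ∧ S.src i = a ∧ S.dst i = b

/-- Vertices of the glued graph: exterior vertices (up to identification) together
with, for each path of length `m`, fresh interior vertices at positions `1,…,m-1`. -/
def Vert (S : PathSys E ι) : Type :=
  Quot S.idRel ⊕ Σ i : ι, {t : ℕ // 0 < t ∧ t < S.len i}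

/-- The vertex corresponding to an exterior vertex. -/
def ext (S : PathSys E ι) (a : E) : S.Vert := Sum.inl (Quot.mk _ a)

/-- The `t`-th vertex on the path named `i` (for `0 ≤ t ≤ S.len i`). -/
def pt (S : PathSys E ι) (i : ι) (t : ℕ) : S.Vert :=
  if h : 0 < t ∧ t < S.len i then Sum.inr ⟨i, t, h⟩
  else if t = 0 then S.ext (S.src i) else S.ext (S.dst i)

/-- The glued graph: consecutive vertices on each path are adjacent. -/
def graph (S : PathSys E ι) : SimpleGraph S.Vert :=
  SimpleGraph.fromRel fun a b =>
    ∃ i t, t + 1 ≤ S.len i ∧ a = S.pt i t ∧ b = S.pt i (t + 1)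

/-- The set of vertices lying on the path named `i`. -/
def onPath (S : PathSys E ι) (i : ι) : Set S.Vert :=
  {v | ∃ t ≤ S.len i, v = S.pt i t}

/-- A walk in the glued graph contains the path named `i` entirely if all vertices of
that path occur consecutively (in forward or backward order) on the walk. -/
def WalkContainsPath (S : PathSys E ι) {x y : S.Vert} (W : S.graph.Walk x y) (i : ι) : Prop :=
  ∃ a, a + S.len i ≤ W.length ∧
    ((∀ t ≤ S.len i, W.getVert (a + t) = S.pt i t) ∨
     (∀ t ≤ S.len i, W.getVert (a + t) = S.pt i (S.len i - t)))

end PathSys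

/-- The exterior vertices of the graph `G_{L,R,ℓ,p,q}`. -/
inductive Ext (n d : ℕ) : Type
  | uL : Fin n → Ext n d
  | uR : Fin n → Ext n d
  | vL : Fin n → Ext n d
  | vR : Fin n → Ext n d
  | wL : Fin d → Ext n d
  | wR : Fin d → Ext n d
  | xL : Ext n d
  | xR : Ext n d
  | yL : Ext n d
  | yR : Ext n d

/-- Names for the paths of the graph `G_{L,R,ℓ,p,q}`. -/
inductive Idx (n d : ℕ) (l r : Fin n → Fin d → Fin 2) : Type
  | uvL : Fin n → Idx n d l r
  | uvR : Fin n → Idx n d l r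
  | vxL : Fin n → Idx n d l r
  | vxR : Fin n → Idx n d l r
  | vwL : (i : Fin n) → (k : Fin d) → l i k = 1 → Idx n d l r
  | vwR : (j : Fin n) → (k : Fin d) → r j k = 1 → Idx n d l r
  | ywL : Fin d → Idx n d l r
  | ywR : Fin d → Idx n d l r
  | ww : Fin d → Idx n d l r
  | xyL : Idx n d l r
  | xyR : Idx n d l r
  | yy : Idx n d l r

/-- The path system defining the graph `G_{L,R,ℓ,p,q}`. -/
def sys (n d : ℕ) (l r : Fin n → Fin d → Fin 2) (ℓ p q : ℕ) :
    PathSys (Ext n d) (Idx n d l r) where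
  src := fun i => match i with
    | .uvL i => .uL i
    | .uvR i => .uR i
    | .vxL i => .vL i
    | .vxR i => .vR i
    | .vwL i _ _ => .vL i
    | .vwR j _ _ => .vR j
    | .ywL _ => .yL
    | .ywR _ => .yR
    | .ww k => .wL k
    | .xyL => .xL
    | .xyR => .xR
    | .yy => .yL
  dst := fun i => match i with
    | .uvL i => .vL i
    | .uvR i => .vR i
    | .vxL _ => .xL
    | .vxR _ => .xR
    | .vwL _ k _ => .wL k
    | .vwR _ k _ => .wR k
    | .ywL k => .wL k
    | .ywR k => .wR k
    | .ww k => .wR k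
    | .xyL => .yL
    | .xyR => .yR
    | .yy => .yR
  len := fun i => match i with
    | .uvL _ => ℓ - p
    | .uvR _ => ℓ - p
    | .vxL _ => ℓ
    | .vxR _ => ℓ
    | .vwL _ _ _ => ℓ
    | .vwR _ _ _ => ℓ
    | .ywL _ => ℓ
    | .ywR _ => ℓ
    | .ww _ => q
    | .xyL => ℓ - p
    | .xyR => ℓ - p
    | .yy => p + q

/-- The set `P_i^L`. -/
def PL (n d : ℕ) (l r : Fin n → Fin d → Fin 2) (ℓ p q : ℕ) (i : Fin n) :
    Set (sys n d l r ℓ p q).Vert :=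
  (sys n d l r ℓ p q).onPath (.uvL i) ∪
    ((sys n d l r ℓ p q).onPath (.vxL i) \ {(sys n d l r ℓ p q).ext .xL}) ∪
    ⋃ (k : Fin d) (h : l i k = 1),
      ((sys n d l r ℓ p q).onPath (.vwL i k h) \ {(sys n d l r ℓ p q).ext (.wL k)})

/-- The set `P_j^R`. -/
def PR (n d : ℕ) (l r : Fin n → Fin d → Fin 2) (ℓ p q : ℕ) (j : Fin n) :
    Set (sys n d l r ℓ p q).Vert :=
  (sys n d l r ℓ p q).onPath (.uvR j) ∪
    ((sys n d l r ℓ p q).onPath (.vxR j) \ {(sys n d l r ℓ p q).ext .xR}) ∪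
    ⋃ (k : Fin d) (h : r j k = 1),
      ((sys n d l r ℓ p q).onPath (.vwR j k h) \ {(sys n d l r ℓ p q).ext (.wR k)})

/-- The set `V^L`. -/
def VL (n d : ℕ) (l r : Fin n → Fin d → Fin 2) (ℓ p q : ℕ) :
    Set (sys n d l r ℓ p q).Vert := ⋃ i : Fin n, PL n d l r ℓ p q i

/-- The set `V^R`. -/
def VR (n d : ℕ) (l r : Fin n → Fin d → Fin 2) (ℓ p q : ℕ) :
    Set (sys n d l r ℓ p q).Vert := ⋃ j : Fin n, PR n d l r ℓ p q j

/-- The set `V^M` of all remaining vertices. -/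
def VM (n d : ℕ) (l r : Fin n → Fin d → Fin 2) (ℓ p q : ℕ) :
    Set (sys n d l r ℓ p q).Vert := (VL n d l r ℓ p q ∪ VR n d l r ℓ p q)ᶜ

namespace PathSys

variable {E ι : Type}

/-- Extension of a potential to all vertices. -/
def pot (S : PathSys E ι) (f : E → ℤ) (hf : ∀ i, |f (S.dst i) - f (S.src i)| ≤ S.len i) :
    S.Vert → ℤ
  | Sum.inl a => Quot.lift f (by
      rintro a b ⟨i, h0, rfl, rfl⟩
      have := hf i
      rw [h0] at this
      have := abs_le.1 this
      push_cast at this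
      omega) a
  | Sum.inr ⟨i, t, _⟩ => min (f (S.src i) + t) (f (S.dst i) + (S.len i - t))

theorem pot_ext (S : PathSys E ι) (f : E → ℤ) (hf) (a : E) : S.pot f hf (S.ext a) = f a := rfl

theorem pot_pt (S : PathSys E ι) (f : E → ℤ) (hf) (i : ι) (t : ℕ) (ht : t ≤ S.len i) :
    S.pot f hf (S.pt i t) = min (f (S.src i) + t) (f (S.dst i) + (S.len i - t)) := by
  have h1 := abs_le.1 (hf i)
  by_cases h : 0 < t ∧ t < S.len i
  · have e : S.pt i t = (Sum.inr ⟨i, t, h⟩ : Quot S.idRel ⊕ Σ i : ι, {t : ℕ // 0 < t ∧ t < S.len i}) :=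
      dif_pos h
    rw [e]; rfl
  · by_cases h2 : t = 0
    · have e : S.pt i t = S.ext (S.src i) := (dif_neg h).trans (if_pos h2)
      rw [e, pot_ext]; subst h2; push_cast; omega
    · have e : S.pt i t = S.ext (S.dst i) := (dif_neg h).trans (if_neg h2)
      rw [e, pot_ext]
      have : t = S.len i := by omega
      omega

theorem pot_adj (S : PathSys E ι) (f : E → ℤ) (hf) {a b : S.Vert} (h : S.graph.Adj a b) :
    S.pot f hf b ≤ S.pot f hf a + 1 := by
  unfold graph at h
  rw [SimpleGraph.fromRel_adj] at h
  obtain ⟨-, ⟨i, t, ht, rfl, rfl⟩ | ⟨i, t, ht, rfl, rfl⟩⟩ := h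
  all_goals
    rw [pot_pt _ _ _ _ _ ht, pot_pt _ _ _ _ _ (by omega)]
    push_cast
    omega

theorem pot_walk (S : PathSys E ι) (f : E → ℤ) (hf) {a b : S.Vert} (W : S.graph.Walk a b) :
    S.pot f hf b ≤ S.pot f hf a + W.length := by
  induction W with
  | nil => simp
  | cons h W ih =>
    have := S.pot_adj f hf h
    rw [SimpleGraph.Walk.length_cons]
    push_cast
    omega

theorem reach_pt (S : PathSys E ι) (i : ι) (t : ℕ) (ht : t ≤ S.len i) :
    S.graph.Reachable (S.ext (S.src i)) (S.pt i t) := by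
  induction t with
  | zero => simp [pt]
  | succ t ih =>
    refine (ih (by omega)).trans ?_
    by_cases h : S.pt i t = S.pt i (t + 1)
    · rw [h]
    · apply SimpleGraph.Adj.reachable
      unfold graph
      rw [SimpleGraph.fromRel_adj]
      exact ⟨h, Or.inl ⟨i, t, ht, rfl, rfl⟩⟩

theorem reach (S : PathSys E ι) (i : ι) :
    S.graph.Reachable (S.ext (S.src i)) (S.ext (S.dst i)) := by
  by_cases h : S.len i = 0
  · have : S.ext (S.src i) = S.ext (S.dst i) :=
      congrArg Sum.inl (Quot.sound ⟨i, h, rfl, rfl⟩)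
    rw [this]
  · have := S.reach_pt i (S.len i) le_rfl
    simpa [pt, h] using this

end PathSys

/-- The potential. -/
def phi (n d : ℕ) (ℓ p q : ℤ) : Ext n d → ℤ
  | .uL _ => 0
  | .uR _ => 4 * ℓ - 2 * p + q
  | .vL _ => ℓ - p
  | .vR _ => 3 * ℓ - p + q
  | .wL _ => 2 * ℓ - p
  | .wR _ => 2 * ℓ - p + q
  | .xL => 2 * ℓ - p
  | .xR => 2 * ℓ - p + q
  | .yL => 2 * ℓ - p
  | .yR => 2 * ℓ - p + q

theorem dist_u1_to_u1 (n d ℓ p q : ℕ) (hn : 1 ≤ n) (hd : 1 ≤ d) (hℓ : 1 ≤ ℓ)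
    (hp : p ≤ 1) (l r : Fin n → Fin d → Fin 2) :
    4 * ℓ - 2 * p + q ≤ (sys n d l r ℓ p q).graph.dist
      ((sys n d l r ℓ p q).ext (.uL ⟨0, hn⟩)) ((sys n d l r ℓ p q).ext (.uR ⟨0, hn⟩)) := by
  have hf : ∀ i, |phi n d ℓ p q ((sys n d l r ℓ p q).dst i) -
      phi n d ℓ p q ((sys n d l r ℓ p q).src i)| ≤ (sys n d l r ℓ p q).len i := by
    intro i
    rw [abs_le]
    cases i <;> simp only [sys, phi] <;> omega
  have R := (sys n d l r ℓ p q).reach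
  have h1 := R (.uvL ⟨0, hn⟩)
  have h2 := R (.vxL ⟨0, hn⟩)
  have h3 := R .xyL
  have h4 := R .yy
  have h5 := (R .xyR).symm
  have h6 := (R (.vxR ⟨0, hn⟩)).symm
  have h7 := (R (.uvR ⟨0, hn⟩)).symm
  obtain ⟨W, hW⟩ := ((((((h1.trans h2).trans h3).trans h4).trans h5).trans h6).trans
    h7).exists_walk_length_eq_dist
  have key := (sys n d l r ℓ p q).pot_walk _ hf W
  rw [hW] at key
  rw [PathSys.pot_ext, PathSys.pot_ext] at key
  simp only [sys, phi] at key ⊢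
  omega

end GraphOV
end

section
/- Let l_1,…,l_n and r_1,…,r_n be d-dimensional bit vectors and let ℓ ≥ 1, p ∈ {0,1}, q ≥ 0 be integers, and let G = G_{L,R,ℓ,p,q}. If no pair l_i, r_j is orthogonal, then for every 1 ≤ i ≤ n, 1 ≤ j ≤ n and every pair of vertices s ∈ P_i^L and t ∈ P_j^R, dist_G(s, t) ≤ 4ℓ − 2p + q. -/
namespace GraphOV

theorem PathSys.pt_zero {E ι : Type} (S : PathSys E ι) (i : ι) : S.pt i 0 = S.ext (S.src i) := by
  simp [PathSys.pt]

theorem PathSys.pt_len {E ι : Type} (S : PathSys E ι) (i : ι) :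
    S.pt i (S.len i) = S.ext (S.dst i) := by
  by_cases h : S.len i = 0
  · rw [h, PathSys.pt_zero]
    exact congrArg Sum.inl (Quot.sound ⟨i, h, rfl, rfl⟩)
  · simp [PathSys.pt, h]

theorem PathSys.edist_step {E ι : Type} (S : PathSys E ι) (i : ι) (t : ℕ) (h : t + 1 ≤ S.len i) :
    S.graph.edist (S.pt i t) (S.pt i (t + 1)) ≤ 1 := by
  by_cases e : S.pt i t = S.pt i (t + 1)
  · rw [e, SimpleGraph.edist_self]; simp
  · have ha : S.graph.Adj (S.pt i t) (S.pt i (t + 1)) := by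
      rw [PathSys.graph, SimpleGraph.fromRel_adj]
      exact ⟨e, Or.inl ⟨i, t, h, rfl, rfl⟩⟩
    exact (SimpleGraph.edist_eq_one_iff_adj.2 ha).le

theorem PathSys.edist_pt {E ι : Type} (S : PathSys E ι) (i : ι) (t k : ℕ) (h : t + k ≤ S.len i) :
    S.graph.edist (S.pt i t) (S.pt i (t + k)) ≤ k := by
  induction k with
  | zero => simp
  | succ k ih =>
    refine (SimpleGraph.edist_triangle (v := S.pt i (t + k))).trans ?_
    push_cast
    exact add_le_add (ih (by omega)) (S.edist_step i (t + k) (by omega))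

theorem PathSys.edist_src {E ι : Type} (S : PathSys E ι) (i : ι) (t : ℕ) (h : t ≤ S.len i) :
    S.graph.edist (S.pt i t) (S.ext (S.src i)) ≤ t := by
  rw [SimpleGraph.edist_comm, ← S.pt_zero i]
  simpa using S.edist_pt i 0 t (by omega)

theorem PathSys.edist_dst {E ι : Type} (S : PathSys E ι) (i : ι) (t : ℕ) (h : t ≤ S.len i) :
    S.graph.edist (S.pt i t) (S.ext (S.dst i)) ≤ (S.len i - t : ℕ) := by
  rw [← S.pt_len i]
  simpa [Nat.add_sub_cancel' h] using S.edist_pt i t (S.len i - t) (by omega)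

theorem PathSys.edist_full {E ι : Type} (S : PathSys E ι) (i : ι) :
    S.graph.edist (S.ext (S.src i)) (S.ext (S.dst i)) ≤ S.len i := by
  rw [← S.pt_zero i]
  simpa using S.edist_dst i 0 (by omega)

theorem PathSys.edist_src_of_ne {E ι : Type} (S : PathSys E ι) (i : ι) (v : S.Vert) (ℓ p : ℕ)
    (hp : p ≤ 1) (hl : S.len i = ℓ) (hv : v ∈ S.onPath i \ {S.ext (S.dst i)}) :
    S.graph.edist v (S.ext (S.src i)) ≤ (ℓ - p : ℕ) := by
  obtain ⟨⟨t, ht, rfl⟩, hne⟩ := hv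
  have : t ≠ S.len i := by
    rintro rfl
    exact hne (S.pt_len i)
  refine (S.edist_src i t ht).trans ?_
  exact_mod_cast (by omega : t ≤ ℓ - p)

theorem PathSys.edist_dst_of_mem {E ι : Type} (S : PathSys E ι) (i : ι) (v : S.Vert)
    (hv : v ∈ S.onPath i) :
    S.graph.edist v (S.ext (S.dst i)) ≤ S.len i := by
  obtain ⟨t, ht, rfl⟩ := hv
  refine (S.edist_dst i t ht).trans ?_
  exact_mod_cast (by omega : S.len i - t ≤ S.len i)

theorem edist_PL (n d ℓ p q : ℕ) (hp : p ≤ 1) (l r : Fin n → Fin d → Fin 2) (i : Fin n)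
    (s : (sys n d l r ℓ p q).Vert) (hs : s ∈ PL n d l r ℓ p q i) :
    (sys n d l r ℓ p q).graph.edist s ((sys n d l r ℓ p q).ext (.vL i)) ≤ (ℓ - p : ℕ) := by
  rcases hs with (hs | hs) | hs
  · exact PathSys.edist_dst_of_mem _ (.uvL i) s hs
  · exact PathSys.edist_src_of_ne _ (.vxL i) s ℓ p hp rfl hs
  · simp only [Set.mem_iUnion] at hs
    obtain ⟨k, h, hs⟩ := hs
    exact PathSys.edist_src_of_ne _ (.vwL i k h) s ℓ p hp rfl hs

theorem edist_PR (n d ℓ p q : ℕ) (hp : p ≤ 1) (l r : Fin n → Fin d → Fin 2) (i : Fin n)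
    (s : (sys n d l r ℓ p q).Vert) (hs : s ∈ PR n d l r ℓ p q i) :
    (sys n d l r ℓ p q).graph.edist s ((sys n d l r ℓ p q).ext (.vR i)) ≤ (ℓ - p : ℕ) := by
  rcases hs with (hs | hs) | hs
  · exact PathSys.edist_dst_of_mem _ (.uvR i) s hs
  · exact PathSys.edist_src_of_ne _ (.vxR i) s ℓ p hp rfl hs
  · simp only [Set.mem_iUnion] at hs
    obtain ⟨k, h, hs⟩ := hs
    exact PathSys.edist_src_of_ne _ (.vwR i k h) s ℓ p hp rfl hs

theorem dist_left_right_no_orth (n d ℓ p q : ℕ) (hn : 1 ≤ n) (hd : 1 ≤ d) (hℓ : 1 ≤ ℓ)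
    (hp : p ≤ 1) (l r : Fin n → Fin d → Fin 2) (hno : ∀ i j, ¬ Orth (l i) (r j)) :
    ∀ (i j : Fin n), ∀ s ∈ PL n d l r ℓ p q i, ∀ t ∈ PR n d l r ℓ p q j,
      (sys n d l r ℓ p q).graph.dist s t ≤ 4 * ℓ - 2 * p + q := by
  intro i j s hs t ht
  have h1 := edist_PL n d ℓ p q hp l r i s hs
  have h5 := edist_PR n d ℓ p q hp l r j t ht
  have hk : ∃ k, l i k = 1 ∧ r j k = 1 := by
    have h := hno i j
    unfold Orth at h
    push Not at h
    obtain ⟨k, ha, hb⟩ := h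
    exact ⟨k, by omega, by omega⟩
  obtain ⟨k, ha, hb⟩ := hk
  have h2 := (sys n d l r ℓ p q).edist_full (.vwL i k ha)
  have h3 := (sys n d l r ℓ p q).edist_full (.ww k)
  have h4 := (sys n d l r ℓ p q).edist_full (.vwR j k hb)
  rw [SimpleGraph.edist_comm] at h4 h5
  have key : (sys n d l r ℓ p q).graph.edist s t ≤
      (((((ℓ - p) + ℓ) + q) + ℓ) + (ℓ - p) : ℕ) := by
    push_cast
    exact SimpleGraph.edist_triangle.trans (add_le_add (SimpleGraph.edist_triangle.trans
      (add_le_add (SimpleGraph.edist_triangle.trans (add_le_add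
        (SimpleGraph.edist_triangle.trans (add_le_add h1 h2)) h3)) h4)) h5)
  have := ENat.toNat_le_of_le_coe key
  unfold SimpleGraph.dist
  omega

end GraphOV
end

section
/- Let l_1,…,l_n and r_1,…,r_n be d-dimensional bit vectors and let ℓ ≥ 1, p ∈ {0,1}, q ≥ 0 be integers, and let G = G_{L,R,ℓ,p,q}. Then for every pair of vertices s and t of G, dist_G(s, t) ≤ 6ℓ − 3p + q; in particular the diameter of G is at most 6ℓ − 3p + q. -/
namespace GraphOV

namespace PathSys

variable {E ι : Type}

/-- There is a walk of length at most `m`. -/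
def Near (S : PathSys E ι) (a b : S.Vert) (m : ℕ) : Prop :=
  ∃ w : S.graph.Walk a b, w.length ≤ m

theorem Near.rfl' (S : PathSys E ι) (a : S.Vert) (m : ℕ) : S.Near a a m :=
  ⟨.nil, by simp⟩

theorem Near.symm' {S : PathSys E ι} {a b : S.Vert} {m : ℕ} (h : S.Near a b m) :
    S.Near b a m := by
  obtain ⟨w, hw⟩ := h
  exact ⟨w.reverse, by simpa using hw⟩

theorem Near.trans' {S : PathSys E ι} {a b c : S.Vert} {m k : ℕ} (h : S.Near a b m)
    (h' : S.Near b c k) : S.Near a c (m + k) := by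
  obtain ⟨w, hw⟩ := h
  obtain ⟨w', hw'⟩ := h'
  exact ⟨w.append w', by rw [SimpleGraph.Walk.length_append]; omega⟩

theorem Near.mono' {S : PathSys E ι} {a b : S.Vert} {m k : ℕ} (h : S.Near a b m)
    (h' : m ≤ k) : S.Near a b k := by
  obtain ⟨w, hw⟩ := h
  exact ⟨w, by omega⟩

theorem near_step (S : PathSys E ι) (i : ι) (t : ℕ) (h : t + 1 ≤ S.len i) :
    S.Near (S.pt i t) (S.pt i (t + 1)) 1 := by
  by_cases he : S.pt i t = S.pt i (t + 1)
  · rw [← he]; exact Near.rfl' _ _ _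
  · have : S.graph.Adj (S.pt i t) (S.pt i (t + 1)) := by
      rw [graph, SimpleGraph.fromRel_adj]
      exact ⟨he, Or.inl ⟨i, t, h, rfl, rfl⟩⟩
    exact ⟨this.toWalk, by simp⟩

theorem near_add (S : PathSys E ι) (i : ι) (t k : ℕ) (h : t + k ≤ S.len i) :
    S.Near (S.pt i t) (S.pt i (t + k)) k := by
  induction k with
  | zero => exact Near.rfl' _ _ _
  | succ k ih => exact (ih (by omega)).trans' (S.near_step i (t + k) (by omega))

theorem pt_zero_s16 (S : PathSys E ι) (i : ι) : S.pt i 0 = S.ext (S.src i) := by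
  simp [pt]

theorem pt_len_s16 (S : PathSys E ι) (i : ι) : S.pt i (S.len i) = S.ext (S.dst i) := by
  by_cases h : S.len i = 0
  · rw [h, pt_zero_s16]
    exact congrArg Sum.inl (Quot.sound ⟨i, h, rfl, rfl⟩)
  · simp [pt, h]

theorem near_src (S : PathSys E ι) (i : ι) (t : ℕ) (h : t ≤ S.len i) :
    S.Near (S.pt i t) (S.ext (S.src i)) t := by
  have := S.near_add i 0 t (by omega)
  rw [pt_zero_s16, Nat.zero_add] at this
  exact this.symm'

theorem near_dst (S : PathSys E ι) (i : ι) (t : ℕ) (h : t ≤ S.len i) :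
    S.Near (S.pt i t) (S.ext (S.dst i)) (S.len i - t) := by
  have := S.near_add i t (S.len i - t) (by omega)
  rwa [Nat.add_sub_cancel' h, pt_len_s16] at this

theorem near_ends (S : PathSys E ι) (i : ι) :
    S.Near (S.ext (S.src i)) (S.ext (S.dst i)) (S.len i) := by
  have := S.near_dst i 0 (by omega)
  rwa [pt_zero_s16] at this

end PathSys

open PathSys in
theorem good_pt (n d ℓ p q : ℕ) (hℓ : 1 ≤ ℓ)
    (hp : p ≤ 1) (l r : Fin n → Fin d → Fin 2) (i : Idx n d l r) (t : ℕ)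
    (ht : t ≤ (sys n d l r ℓ p q).len i) :
    ∃ a b, (sys n d l r ℓ p q).Near ((sys n d l r ℓ p q).pt i t)
        ((sys n d l r ℓ p q).ext .yL) a ∧
      (sys n d l r ℓ p q).Near ((sys n d l r ℓ p q).pt i t)
        ((sys n d l r ℓ p q).ext .yR) b ∧ a + b ≤ 6 * ℓ - 3 * p + q := by
  set S := sys n d l r ℓ p q with hS
  have hyy : S.Near (S.ext .yL) (S.ext .yR) (p + q) := S.near_ends .yy
  have hL : ∀ s, S.Near s (S.ext .yL) (3 * ℓ - 2 * p) →
      ∃ a b, S.Near s (S.ext .yL) a ∧ S.Near s (S.ext .yR) b ∧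
        a + b ≤ 6 * ℓ - 3 * p + q := fun s h =>
    ⟨_, _, h, h.trans' hyy, by omega⟩
  have hR : ∀ s, S.Near s (S.ext .yR) (3 * ℓ - 2 * p) →
      ∃ a b, S.Near s (S.ext .yL) a ∧ S.Near s (S.ext .yR) b ∧
        a + b ≤ 6 * ℓ - 3 * p + q := fun s h =>
    ⟨_, _, h.trans' hyy.symm', h, by omega⟩
  have xyL : S.Near (S.ext .xL) (S.ext .yL) (ℓ - p) := S.near_ends .xyL
  have xyR : S.Near (S.ext .xR) (S.ext .yR) (ℓ - p) := S.near_ends .xyR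
  have vyL : ∀ i, S.Near (S.ext (.vL i)) (S.ext .yL) (ℓ + (ℓ - p)) := fun i =>
    Near.trans' (S.near_ends (.vxL i)) xyL
  have vyR : ∀ i, S.Near (S.ext (.vR i)) (S.ext .yR) (ℓ + (ℓ - p)) := fun i =>
    Near.trans' (S.near_ends (.vxR i)) xyR
  have wyL : ∀ k, S.Near (S.ext (.wL k)) (S.ext .yL) ℓ := fun k =>
    Near.symm' (S.near_ends (.ywL k))
  have wyR : ∀ k, S.Near (S.ext (.wR k)) (S.ext .yR) ℓ := fun k =>
    Near.symm' (S.near_ends (.ywR k))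
  have hs := S.near_src i t ht
  have hd := S.near_dst i t ht
  cases i with
  | uvL i =>
    change t ≤ ℓ - p at ht
    change S.Near _ _ (ℓ - p - t) at hd
    exact hL _ ((hd.trans' (vyL i)).mono' (by omega))
  | uvR i =>
    change t ≤ ℓ - p at ht
    change S.Near _ _ (ℓ - p - t) at hd
    exact hR _ ((hd.trans' (vyR i)).mono' (by omega))
  | vxL i =>
    change t ≤ ℓ at ht
    change S.Near _ _ (ℓ - t) at hd
    exact hL _ ((hd.trans' xyL).mono' (by omega))
  | vxR i =>
    change t ≤ ℓ at ht
    change S.Near _ _ (ℓ - t) at hd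
    exact hR _ ((hd.trans' xyR).mono' (by omega))
  | vwL i k h =>
    change t ≤ ℓ at ht
    change S.Near _ _ (ℓ - t) at hd
    by_cases h0 : t = 0
    · exact hL _ ((hs.trans' (vyL i)).mono' (by omega))
    · exact hL _ ((hd.trans' (wyL k)).mono' (by omega))
  | vwR i k h =>
    change t ≤ ℓ at ht
    change S.Near _ _ (ℓ - t) at hd
    by_cases h0 : t = 0
    · exact hR _ ((hs.trans' (vyR i)).mono' (by omega))
    · exact hR _ ((hd.trans' (wyR k)).mono' (by omega))
  | ywL k =>
    change t ≤ ℓ at ht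
    exact hL _ (Near.mono' hs (by omega))
  | ywR k =>
    change t ≤ ℓ at ht
    exact hR _ (Near.mono' hs (by omega))
  | ww k =>
    change t ≤ q at ht
    change S.Near _ _ (q - t) at hd
    exact ⟨_, _, hs.trans' (wyL k), hd.trans' (wyR k), by omega⟩
  | xyL =>
    change t ≤ ℓ - p at ht
    change S.Near _ _ (ℓ - p - t) at hd
    exact hL _ (hd.mono' (by omega))
  | xyR =>
    change t ≤ ℓ - p at ht
    change S.Near _ _ (ℓ - p - t) at hd
    exact hR _ (hd.mono' (by omega))
  | yy =>
    change t ≤ p + q at ht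
    change S.Near _ _ (p + q - t) at hd
    exact ⟨_, _, hs, hd, by omega⟩

theorem PathSys.exists_pt_gen {E ι : Type} (S : PathSys E ι)
    (h : ∀ e, ∃ i, S.src i = e ∨ S.dst i = e) (s : S.Vert) :
    ∃ i t, t ≤ S.len i ∧ s = S.pt i t := by
  rcases s with e | ⟨i, t, ht⟩
  · obtain ⟨e, rfl⟩ := Quot.exists_rep e
    obtain ⟨i, rfl | rfl⟩ := h e
    · exact ⟨i, 0, Nat.zero_le _, (S.pt_zero_s16 i).symm⟩
    · exact ⟨i, S.len i, le_rfl, (S.pt_len_s16 i).symm⟩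
  · exact ⟨i, t, ht.2.le, Eq.symm <|
      @dif_pos (0 < t ∧ t < S.len i) _ ht S.Vert (fun h => Sum.inr ⟨i, t, h⟩)
        (fun _ => if t = 0 then S.ext (S.src i) else S.ext (S.dst i))⟩

theorem exists_pt (n d ℓ p q : ℕ) (l r : Fin n → Fin d → Fin 2)
    (s : (sys n d l r ℓ p q).Vert) :
    ∃ i t, t ≤ (sys n d l r ℓ p q).len i ∧ s = (sys n d l r ℓ p q).pt i t := by
  refine PathSys.exists_pt_gen _ (fun e => ?_) s
  cases e with
  | uL i => exact ⟨.uvL i, .inl rfl⟩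
  | uR i => exact ⟨.uvR i, .inl rfl⟩
  | vL i => exact ⟨.vxL i, .inl rfl⟩
  | vR i => exact ⟨.vxR i, .inl rfl⟩
  | wL k => exact ⟨.ww k, .inl rfl⟩
  | wR k => exact ⟨.ww k, .inr rfl⟩
  | xL => exact ⟨.xyL, .inl rfl⟩
  | xR => exact ⟨.xyR, .inl rfl⟩
  | yL => exact ⟨.yy, .inl rfl⟩
  | yR => exact ⟨.yy, .inr rfl⟩

theorem near_all (n d ℓ p q : ℕ) (hℓ : 1 ≤ ℓ)
    (hp : p ≤ 1) (l r : Fin n → Fin d → Fin 2) (s t : (sys n d l r ℓ p q).Vert) :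
    (sys n d l r ℓ p q).Near s t (6 * ℓ - 3 * p + q) := by
  obtain ⟨i, a, ha, rfl⟩ := exists_pt n d ℓ p q l r s
  obtain ⟨j, b, hb, rfl⟩ := exists_pt n d ℓ p q l r t
  obtain ⟨a1, b1, h1, h2, h3⟩ := good_pt n d ℓ p q hℓ hp l r i a ha
  obtain ⟨a2, b2, h4, h5, h6⟩ := good_pt n d ℓ p q hℓ hp l r j b hb
  by_cases h : a1 + a2 ≤ 6 * ℓ - 3 * p + q
  · exact (h1.trans' h4.symm').mono' h
  · exact (h2.trans' h5.symm').mono' (by omega)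

theorem diam_upper_bound (n d ℓ p q : ℕ) (hn : 1 ≤ n) (hd : 1 ≤ d) (hℓ : 1 ≤ ℓ)
    (hp : p ≤ 1) (l r : Fin n → Fin d → Fin 2) :
    (∀ s t : (sys n d l r ℓ p q).Vert,
      (sys n d l r ℓ p q).graph.dist s t ≤ 6 * ℓ - 3 * p + q) ∧
    (sys n d l r ℓ p q).graph.diam ≤ 6 * ℓ - 3 * p + q := by
  have key := near_all n d ℓ p q hℓ hp l r
  constructor
  · intro s t
    obtain ⟨w, hw⟩ := key s t
    exact (SimpleGraph.dist_le w).trans hw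
  · have : (sys n d l r ℓ p q).graph.ediam ≤ ((6 * ℓ - 3 * p + q : ℕ) : ℕ∞) := by
      refine SimpleGraph.ediam_le_of_edist_le fun s t => ?_
      obtain ⟨w, hw⟩ := key s t
      exact (SimpleGraph.edist_le w).trans (by exact_mod_cast hw)
    exact ENat.toNat_le_of_le_natCast this

end GraphOV
end

section
/- Let x and y be n-dimensional bit vectors and let s_i denote the binary representation of the index i with ⌈log n⌉ bits. For each 1 ≤ i ≤ n let l_i be the bit vector obtained by concatenating x[i], ¬x[i], ¬x[i], s_i, and ¬s_i, and let r_j be the bit vector obtained by concatenating ¬y[j], y[j], ¬y[j], ¬s_j, and s_j. If l_i and r_j are orthogonal for some 1 ≤ i, j ≤ n, then i = j and x[i] = y[i] = 1. -/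
namespace BitOV

/-- Two bit vectors (functions into `Fin 2`) are orthogonal if in every coordinate
at least one of them is `0`. -/
def Orth {d : ℕ} (a b : Fin d → Fin 2) : Prop := ∀ k, a k = 0 ∨ b k = 0

/-- Flip a bit: `¬1 = 0` and `¬0 = 1`. -/
def bflip (b : Fin 2) : Fin 2 := 1 - b

/-- The `k`-th bit of the binary representation of `m`. -/
def bitAt (m k : ℕ) : Fin 2 := if Nat.testBit m k then 1 else 0

/-- The binary representation of the index `i` with `⌈log n⌉` bits. -/
def srep (n : ℕ) (i : Fin n) : Fin (Nat.clog 2 n) → Fin 2 := fun k => bitAt i.val k.val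

/-- The vector `l_i`: the concatenation of `x[i]`, `¬x[i]`, `¬x[i]`, `s_i` and `¬s_i`. -/
def lvec {n : ℕ} (x : Fin n → Fin 2) (i : Fin n) :
    Fin (3 + Nat.clog 2 n + Nat.clog 2 n) → Fin 2 :=
  Fin.append (Fin.append ![x i, bflip (x i), bflip (x i)] (srep n i))
    (fun k => bflip (srep n i k))

/-- The vector `r_j`: the concatenation of `¬y[j]`, `y[j]`, `¬y[j]`, `¬s_j` and `s_j`. -/
def rvec {n : ℕ} (y : Fin n → Fin 2) (j : Fin n) :
    Fin (3 + Nat.clog 2 n + Nat.clog 2 n) → Fin 2 :=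
  Fin.append (Fin.append ![bflip (y j), y j, bflip (y j)] (fun k => bflip (srep n j k)))
    (srep n j)

theorem orthogonal_pair_implies_common_one (n : ℕ) (hn : 1 ≤ n)
    (x y : Fin n → Fin 2) (i j : Fin n) (h : Orth (lvec x i) (rvec y j)) :
    i = j ∧ x i = 1 ∧ y i = 1 := by
  have h1 := fun k : Fin 3 => h (Fin.castAdd _ (Fin.castAdd _ k))
  have h2 := fun k : Fin (Nat.clog 2 n) => h (Fin.castAdd _ (Fin.natAdd _ k))
  have h3 := fun k : Fin (Nat.clog 2 n) => h (Fin.natAdd _ k)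
  simp only [lvec, rvec, Fin.append_left, Fin.append_right] at h1 h2 h3
  have key : ∀ a b : Fin 2, (a = 0 ∨ bflip b = 0) → (bflip a = 0 ∨ b = 0) → a = b := by
    decide
  have key2 : ∀ a b : Fin 2, (a = 0 ∨ bflip b = 0) → (bflip a = 0 ∨ b = 0) →
      (bflip a = 0 ∨ bflip b = 0) → a = 1 ∧ b = 1 := by
    decide
  have hij : i = j := by
    apply Fin.ext
    apply Nat.eq_of_testBit_eq
    intro k
    have hlt : n ≤ 2 ^ Nat.clog 2 n := Nat.le_pow_clog (by norm_num) n
    by_cases hk : k < Nat.clog 2 n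
    · have e := key _ _ (h2 ⟨k, hk⟩) (h3 ⟨k, hk⟩)
      have key3 : ∀ a b : Bool, (if a then (1 : Fin 2) else 0) = (if b then 1 else 0) → a = b := by
        decide
      exact key3 _ _ e
    · have hp : 2 ^ Nat.clog 2 n ≤ 2 ^ k := Nat.pow_le_pow_right (by norm_num) (by omega)
      rw [Nat.testBit_lt_two_pow (by omega), Nat.testBit_lt_two_pow (by omega)]
  subst hij
  exact ⟨rfl, key2 _ _ (h1 0) (h1 1) (h1 2)⟩

end BitOV
end
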